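/- Assume α > 1, λ is nondecreasing on [t₀,∞), b(t) > β'(t) + β(t)/t (equivalently w(t) > 0) for every t ≥ t₀, and there exists ε ∈ (0, α−1) such that (α−3)·w(t) − t·w'(t) ≥ ε·b(t) for every t ≥ t₀. Then the trajectory is bounded, i.e. sup_{t ≥ t₀} ‖x(t)‖ < +∞. -/

import Mathlib

open Set MeasureTheory Filter Real

noncomputable section

/-- Convexity for extended-real-valued functions. -/
def EConvexOn {H : Type*} [NormedAddCommGroup H] [NormedSpace ℝ H] (f : H → EReal) : Prop :=
  ∀ x y : H, ∀ a c : ℝ, 0 ≤ a → 0 ≤ c → a + c = 1 →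
    f (a • x + c • y) ≤ (a : EReal) * f x + (c : EReal) * f y

/-- `p` is the proximal point of `f` with parameter `l` at `x`, i.e. the (unique) minimizer of
`y ↦ f y + ‖x - y‖² / (2l)`. -/
def IsProxPt {H : Type*} [NormedAddCommGroup H] [InnerProductSpace ℝ H]
    (f : H → EReal) (l : ℝ) (x p : H) : Prop :=
  ∀ y : H, f p + ((‖x - p‖ ^ 2 / (2 * l) : ℝ) : EReal)
      ≤ f y + ((‖x - y‖ ^ 2 / (2 * l) : ℝ) : EReal)

/-- The Moreau envelope of `f` with parameter `l` (as a real number). -/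
def moreau {H : Type*} [NormedAddCommGroup H] [InnerProductSpace ℝ H]
    (f : H → EReal) (l : ℝ) (x : H) : ℝ :=
  (⨅ y : H, f y + ((‖x - y‖ ^ 2 / (2 * l) : ℝ) : EReal)).toReal

/-!
Write `G t = ∇Φ_{λ(t)}(x t)`, `φ t = Φ_{λ(t)}(x t) - min Φ`, `c = α - 1 - ε`, and let `z` be a
minimizer of `Φ`. The subgradient inequality for `Φ_{λ(t)}`, together with the fact that `Φ_λ`
decreases in `λ`, gives `φ t - φ s ≤ ⟪G t, x t - x s⟫` for `s ≤ t`, which stands in for the chain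
rule. With it, the energy
`(t² w + ε t β) φ + ‖c (x - z) + t (ẋ + β G)‖² / 2 + (c ε / 2) ‖x - z‖²`
is seen to be nonincreasing: differentiating, the terms in `⟪G, ẋ⟫` and `⟪x - z, ẋ⟫` cancel, and the
coefficient of `φ` that is left, after `φ ≤ ⟪G, x - z⟫`, is nonpositive by the condition on `w`.
The last summand of the energy then bounds `‖x - z‖`.
-/

open scoped Topology

section Comparison

variable {f : ℝ → ℝ} {a : ℝ}

lemma antitoneOn_Ici_of_liminf_slope_right_nonpos
    (hleft : ∀ t > a, LowerSemicontinuousWithinAt f (Iic t) t)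
    (hright : ∀ t ≥ a, ∀ r > 0, ∃ᶠ s in 𝓝[>] t, slope f t s < r) : AntitoneOn f (Ici a) := by
  intro s (hs : a ≤ s) t _ hst
  suffices hslope : ∀ r > 0, f t ≤ f s + r * (t - s) by
    have hlim : Tendsto (fun r : ℝ => f s + r * (t - s)) (𝓝[>] 0) (𝓝 (f s)) := by
      have hcont : Continuous fun r : ℝ => f s + r * (t - s) := by fun_prop
      simpa using (hcont.tendsto 0).mono_left nhdsWithin_le_nhds
    exact ge_of_tendsto hlim (eventually_mem_nhdsWithin.mono hslope)
  intro r hr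
  let S : Set ℝ := {τ ∈ Icc s t | f τ ≤ f s + r * (τ - s)}
  have hsS : s ∈ S := ⟨left_mem_Icc.2 hst, by simp⟩
  obtain ⟨c, hc⟩ := Real.exists_isLUB ⟨s, hsS⟩ ⟨t, fun τ hτ => hτ.1.2⟩
  have hsc : s ≤ c := hc.1 hsS
  have hct : c ≤ t := hc.2 fun τ hτ => hτ.1.2
  have hcS : c ∈ S := by
    by_contra hcS
    have hsc' : s < c := hsc.lt_of_ne fun h => hcS (h ▸ hsS)
    have hfc : f s + r * (c - s) < f c := not_le.1 fun h => hcS ⟨⟨hsc, hct⟩, h⟩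
    obtain ⟨τ, hτS, hτ⟩ := ((hc.frequently_mem ⟨s, hsS⟩).and_eventually
      (hleft c (hs.trans_lt hsc') _ hfc)).exists
    have hτc : r * (τ - s) ≤ r * (c - s) := by gcongr; exact hc.1 hτS
    linarith [hτS.2]
  obtain rfl | hct' := hct.eq_or_lt
  · exact hcS.2
  obtain ⟨τ, hτr, hcτ, hτt⟩ := ((hright c (hs.trans hsc) r hr).and_eventually
    (Ioo_mem_nhdsGT hct')).exists
  have hτ : f τ < f c + r * (τ - c) := by
    rw [slope_def_field, div_lt_iff₀ (sub_pos.2 hcτ)] at hτr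
    linarith
  have hτS : τ ∈ S := ⟨⟨hsc.trans hcτ.le, hτt.le⟩, by linarith [hcS.2]⟩
  exact absurd (hc.1 hτS) hcτ.not_ge

lemma antitoneOn_Ici_of_touching
    (hleft : ∀ t > a, ∃ g : ℝ → ℝ, ContinuousAt g t ∧ g t = f t ∧ ∀ s ∈ Icc a t, g s ≤ f s)
    (hright : ∀ t ≥ a, ∃ g : ℝ → ℝ, ∃ d ≤ 0, HasDerivAt g d t ∧ g t = f t ∧ ∀ s ≥ t, f s ≤ g s) :
    AntitoneOn f (Ici a) := by
  refine antitoneOn_Ici_of_liminf_slope_right_nonpos (fun t ht y hy => ?_) fun t ht r hr => ?_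
  · obtain ⟨g, hg, hgt, hgf⟩ := hleft t ht
    have hyg : ∀ᶠ s in 𝓝[≤] t, y < g s :=
      (hg.eventually (lt_mem_nhds (hgt ▸ hy))).filter_mono nhdsWithin_le_nhds
    filter_upwards [hyg, Icc_mem_nhdsLE ht] with s hys hs using hys.trans_le (hgf s hs)
  · obtain ⟨g, d, hd, hg, hgt, hfg⟩ := hright t ht
    have hslope := hg.hasDerivWithinAt.limsup_slope_le' (s := Ioi t) self_notMem_Ioi
      (hd.trans_lt hr)
    refine Eventually.frequently ?_
    filter_upwards [hslope, self_mem_nhdsWithin] with s hgs hts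
    have hts' : 0 < s - t := sub_pos.2 hts
    refine lt_of_le_of_lt ?_ hgs
    rw [slope_def_field, slope_def_field, hgt]
    gcongr
    exact hfg s (le_of_lt hts)

end Comparison

section MoreauEnvelope

variable {H : Type*} [NormedAddCommGroup H] [InnerProductSpace ℝ H] {Φ : H → EReal} {l : ℝ}
  {x p y : H}

namespace IsProxPt

lemma ne_top (hp : IsProxPt Φ l x p) (hy : Φ y ≠ ⊤) : Φ p ≠ ⊤ := by
  intro hpt
  have hle := hp y
  rw [hpt, EReal.top_add_coe, top_le_iff] at hle
  exact EReal.add_ne_top hy (EReal.coe_ne_top _) hle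

lemma moreau_eq (hp : IsProxPt Φ l x p) (hbot : Φ p ≠ ⊥) (htop : Φ p ≠ ⊤) :
    moreau Φ l x = (Φ p).toReal + ‖x - p‖ ^ 2 / (2 * l) := by
  have hmin : (⨅ y, Φ y + ((‖x - y‖ ^ 2 / (2 * l) : ℝ) : EReal))
      = Φ p + ((‖x - p‖ ^ 2 / (2 * l) : ℝ) : EReal) := le_antisymm (iInf_le _ p) (le_iInf hp)
  rw [moreau, hmin, EReal.toReal_add htop hbot (EReal.coe_ne_top _) (EReal.coe_ne_bot _),
    EReal.toReal_coe]

lemma le_moreau {m : ℝ} (hp : IsProxPt Φ l x p) (hbot : Φ p ≠ ⊥) (htop : Φ p ≠ ⊤) (hl : 0 ≤ l)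
    (hm : m ≤ Φ p) : m ≤ moreau Φ l x := by
  rw [hp.moreau_eq hbot htop]
  have hmp : m ≤ (Φ p).toReal := EReal.coe_le_coe_iff.1 (hm.trans (EReal.le_coe_toReal htop))
  exact hmp.trans (le_add_of_nonneg_right (by positivity))

lemma toReal_sub_toReal_le_add (hp : IsProxPt Φ l x p) (hconv : EConvexOn Φ)
    (hbot : ∀ y, Φ y ≠ ⊥) (hy : Φ y ≠ ⊤) {a : ℝ} (ha : a ∈ Ioo (0 : ℝ) 1) :
    (Φ p).toReal - (Φ y).toReal
      ≤ inner ℝ (l⁻¹ • (x - p)) (p - y) + a * (‖p - y‖ ^ 2 / (2 * l)) := by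
  obtain ⟨ha0, ha1⟩ := ha
  have hsegment := (hp ((1 - a) • p + a • y)).trans
    (add_le_add_left (hconv p y (1 - a) a (by linarith) ha0.le (by ring)) _)
  rw [← EReal.coe_toReal (hp.ne_top hy) (hbot p), ← EReal.coe_toReal hy (hbot y)] at hsegment
  have hreal : (Φ p).toReal + ‖x - p‖ ^ 2 / (2 * l) ≤ (1 - a) * (Φ p).toReal + a * (Φ y).toReal
      + ‖x - ((1 - a) • p + a • y)‖ ^ 2 / (2 * l) := by exact_mod_cast hsegment
  have hexpand : ‖x - ((1 - a) • p + a • y)‖ ^ 2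
      = ‖x - p‖ ^ 2 + 2 * (a * inner ℝ (x - p) (p - y)) + a ^ 2 * ‖p - y‖ ^ 2 := by
    have hvec : x - ((1 - a) • p + a • y) = (x - p) + a • (p - y) := by module
    rw [hvec, norm_add_sq_real, inner_smul_right, norm_smul, mul_pow, Real.norm_eq_abs, sq_abs]
  rw [hexpand] at hreal
  rw [real_inner_smul_left]
  refine le_of_mul_le_mul_left ?_ ha0
  linear_combination hreal

lemma toReal_sub_toReal_le_inner (hp : IsProxPt Φ l x p) (hconv : EConvexOn Φ)
    (hbot : ∀ y, Φ y ≠ ⊥) (hy : Φ y ≠ ⊤) :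
    (Φ p).toReal - (Φ y).toReal ≤ inner ℝ (l⁻¹ • (x - p)) (p - y) := by
  have hlim : Tendsto
      (fun a : ℝ => inner ℝ (l⁻¹ • (x - p)) (p - y) + a * (‖p - y‖ ^ 2 / (2 * l)))
      (𝓝[>] 0) (𝓝 (inner ℝ (l⁻¹ • (x - p)) (p - y))) := by
    have hcont : Continuous fun a : ℝ =>
        inner ℝ (l⁻¹ • (x - p)) (p - y) + a * (‖p - y‖ ^ 2 / (2 * l)) := by fun_prop
    simpa using (hcont.tendsto 0).mono_left nhdsWithin_le_nhds
  refine ge_of_tendsto hlim ?_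
  filter_upwards [Ioo_mem_nhdsGT one_pos] with a ha
    using hp.toReal_sub_toReal_le_add hconv hbot hy ha

lemma moreau_le_toReal_add_inner (hp : IsProxPt Φ l x p) (hconv : EConvexOn Φ)
    (hbot : ∀ y, Φ y ≠ ⊥) (hy : Φ y ≠ ⊤) {l' : ℝ} (hl' : 0 < l') (hl'l : l' ≤ l) (x' : H) :
    moreau Φ l x ≤ (Φ y).toReal + ‖x' - y‖ ^ 2 / (2 * l')
      + inner ℝ (l⁻¹ • (x - p)) (x - x') := by
  have hl : 0 < l := hl'.trans_le hl'l
  have hsub := hp.toReal_sub_toReal_le_inner hconv hbot hy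
  rw [hp.moreau_eq (hbot p) (hp.ne_top hy)]
  set G : H := l⁻¹ • (x - p)
  have hxp : x - p = l • G := (smul_inv_smul₀ hl.ne' _).symm
  have hnorm : ‖x - p‖ ^ 2 / (2 * l) = l / 2 * ‖G‖ ^ 2 := by
    rw [hxp, norm_smul, mul_pow, Real.norm_eq_abs, sq_abs]
    field_simp
  have hinner : inner ℝ G (p - y) = inner ℝ G (x - x') + inner ℝ G (x' - y) - l * ‖G‖ ^ 2 := by
    have hvec : p - y = (x - x') + (x' - y) - l • G := by rw [← hxp]; abel
    rw [hvec, inner_sub_right, inner_add_right, real_inner_smul_right, real_inner_self_eq_norm_sq]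
  have hyoung : inner ℝ G (x' - y) ≤ ‖x' - y‖ ^ 2 / (2 * l') + l' / 2 * ‖G‖ ^ 2 := by
    have hsq : 0 ≤ ‖(x' - y) - l' • G‖ ^ 2 / (2 * l') := by positivity
    rw [norm_sub_sq_real, real_inner_smul_right, norm_smul, mul_pow, Real.norm_eq_abs, sq_abs,
      real_inner_comm] at hsq
    have hsplit : (‖x' - y‖ ^ 2 - 2 * (l' * inner ℝ G (x' - y)) + l' ^ 2 * ‖G‖ ^ 2) / (2 * l')
        = ‖x' - y‖ ^ 2 / (2 * l') + l' / 2 * ‖G‖ ^ 2 - inner ℝ G (x' - y) := by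
      field_simp
      ring
    linarith
  have hmono : l' / 2 * ‖G‖ ^ 2 ≤ l / 2 * ‖G‖ ^ 2 := by gcongr
  linarith

end IsProxPt

end MoreauEnvelope

section Energy

variable {H : Type*} [NormedAddCommGroup H] [InnerProductSpace ℝ H] {t₀ α c ε : ℝ}
  {β β' w w' φ : ℝ → ℝ} {x v acc G G' : ℝ → H} {z : H} {t : ℝ}

/-- The one-sided subgradient inequality on `[t₀, ∞)` that replaces the chain rule
`φ' = ⟪G, ẋ⟫` for a function `φ` of time that may decrease faster than the chain rule predicts. -/
def IsSubgradientAlong (t₀ : ℝ) (φ : ℝ → ℝ) (x G : ℝ → H) : Prop :=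
  ∀ s ≥ t₀, ∀ t ≥ s, φ t ≤ φ s + inner ℝ (G t) (x t - x s)

lemma IsSubgradientAlong.antitoneOn_mul_add (hφ : IsSubgradientAlong t₀ φ x G)
    {A A' K K' : ℝ → ℝ} (hA : ∀ t ≥ t₀, HasDerivAt A (A' t) t) (hA0 : ∀ t ≥ t₀, 0 ≤ A t)
    (hK : ∀ t ≥ t₀, HasDerivAt K (K' t) t) (hx : ∀ t ≥ t₀, HasDerivAt x (v t) t)
    (hG : ∀ t ≥ t₀, HasDerivAt G (G' t) t)
    (hdecay : ∀ t ≥ t₀, A' t * φ t + A t * inner ℝ (G t) (v t) + K' t ≤ 0) :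
    AntitoneOn (fun t => A t * φ t + K t) (Ici t₀) := by
  refine antitoneOn_Ici_of_touching (fun t ht => ?_) fun t ht => ?_
  · refine ⟨fun s => A s * (φ t - inner ℝ (G t) (x t - x s)) + K s, ?_, by simp, fun s hs => ?_⟩
    · have hAc := (hA t ht.le).continuousAt
      have hKc := (hK t ht.le).continuousAt
      have hxc := (hx t ht.le).continuousAt
      fun_prop
    · have hsub := hφ s hs.1 t hs.2
      exact add_le_add_left
        (mul_le_mul_of_nonneg_left (sub_le_iff_le_add.2 hsub) (hA0 s hs.1)) _
  · have htouch := ((hA t ht).mul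
      (((hG t ht).inner ℝ ((hx t ht).sub_const (x t))).const_add (φ t))).add (hK t ht)
    refine ⟨_, _, ?_, htouch, by simp, fun s hs => ?_⟩
    · simpa using hdecay t ht
    · exact add_le_add_left
        (mul_le_mul_of_nonneg_left (hφ t ht s hs) (hA0 s (ht.trans hs))) _

/-- The vector `c (x - z) + t (ẋ + β G)`, whose derivative along the inertial dynamics contains
neither the acceleration nor `Ġ`. -/
def anchoredMomentum (c : ℝ) (β : ℝ → ℝ) (x v G : ℝ → H) (z : H) (t : ℝ) : H :=
  c • (x t - z) + t • (v t + β t • G t)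

/-- The part of the energy that does not involve the values of the potential. -/
def kineticEnergy (c ε : ℝ) (β : ℝ → ℝ) (x v G : ℝ → H) (z : H) (t : ℝ) : ℝ :=
  1 / 2 * ‖anchoredMomentum c β x v G z t‖ ^ 2 + c * ε / 2 * ‖x t - z‖ ^ 2

/-- The coefficient of the potential gap in the energy. -/
def potentialWeight (ε : ℝ) (w β : ℝ → ℝ) (t : ℝ) : ℝ :=
  t ^ 2 * w t + ε * (t * β t)

lemma potentialWeight_nonneg (ht : 0 ≤ t) (hε : 0 ≤ ε) (hw : 0 ≤ w t) (hβ : 0 ≤ β t) :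
    0 ≤ potentialWeight ε w β t := by
  unfold potentialWeight
  positivity

lemma hasDerivAt_potentialWeight {dw dβ : ℝ} (hw : HasDerivAt w dw t) (hβ : HasDerivAt β dβ t) :
    HasDerivAt (potentialWeight ε w β)
      (2 * t * w t + t ^ 2 * dw + ε * (β t + t * dβ)) t := by
  have hderiv := (((hasDerivAt_id t).pow 2).mul hw).add
    (((hasDerivAt_id t).mul hβ).const_mul ε)
  exact hderiv.congr_deriv (by simp)

lemma hasDerivAt_anchoredMomentum {dβ wt : ℝ} {a dG : H} (ht : t ≠ 0) (hβ : HasDerivAt β dβ t)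
    (hx : HasDerivAt x (v t) t) (hv : HasDerivAt v a t) (hG : HasDerivAt G dG t)
    (hode : a + (α / t) • v t + β t • dG + (wt + dβ + β t / t) • G t = 0) :
    HasDerivAt (anchoredMomentum (α - 1 - ε) β x v G z) (-(ε • v t) - (t * wt) • G t) t := by
  have hderiv := ((hx.sub_const z).const_smul (α - 1 - ε)).add
    ((hasDerivAt_id t).smul (hv.add (hβ.smul hG)))
  have hacc : a = -((α / t) • v t + β t • dG + (wt + dβ + β t / t) • G t) := by
    rw [eq_neg_iff_add_eq_zero, ← hode]
    abel
  refine hderiv.congr_deriv ?_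
  rw [hacc]
  simp only [id_eq, Pi.add_apply, Pi.smul_apply']
  match_scalars <;> field_simp <;> ring

lemma hasDerivAt_kineticEnergy {dβ wt : ℝ} {a dG : H} (ht : t ≠ 0) (hβ : HasDerivAt β dβ t)
    (hx : HasDerivAt x (v t) t) (hv : HasDerivAt v a t) (hG : HasDerivAt G dG t)
    (hode : a + (α / t) • v t + β t • dG + (wt + dβ + β t / t) • G t = 0) :
    HasDerivAt (kineticEnergy (α - 1 - ε) ε β x v G z)
      (-((t ^ 2 * wt + ε * (t * β t)) * inner ℝ (G t) (v t))
        - (α - 1 - ε) * t * wt * inner ℝ (G t) (x t - z)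
        - t * ε * ‖v t‖ ^ 2 - t ^ 2 * β t * wt * ‖G t‖ ^ 2) t := by
  have hderiv := ((hasDerivAt_anchoredMomentum (ε := ε) (z := z) ht hβ hx hv hG
    hode).norm_sq.const_mul (1 / 2)).add ((hx.sub_const z).norm_sq.const_mul ((α - 1 - ε) * ε / 2))
  refine hderiv.congr_deriv ?_
  simp only [anchoredMomentum, inner_add_left, inner_sub_right, inner_neg_right,
    real_inner_smul_left, real_inner_smul_right, smul_add, real_inner_self_eq_norm_sq,
    inner_sub_left, real_inner_comm (G t)]
  ring

lemma deriv_potentialWeight_le {wt dw βt dβ : ℝ} (ht : 0 < t)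
    (hgrowth : ε * (wt + dβ + βt / t) ≤ (α - 3) * wt - t * dw) :
    2 * t * wt + t ^ 2 * dw + ε * (βt + t * dβ) ≤ (α - 1 - ε) * t * wt := by
  have hβ : βt + t * dβ = t * (dβ + βt / t) := by field_simp; ring
  have hscaled := mul_le_mul_of_nonneg_left hgrowth ht.le
  rw [hβ]
  linarith

/-- The Lyapunov function of the dynamics, for a potential gap `φ` and an anchor `z`. -/
def energy (c ε : ℝ) (w β φ : ℝ → ℝ) (x v G : ℝ → H) (z : H) (t : ℝ) : ℝ :=
  potentialWeight ε w β t * φ t + kineticEnergy c ε β x v G z t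

lemma antitoneOn_energy (ht₀ : 0 < t₀) (hε : 0 ≤ ε) (hεα : ε ≤ α - 1)
    (hβ0 : ∀ t ≥ t₀, 0 ≤ β t) (hw0 : ∀ t ≥ t₀, 0 ≤ w t) (hφ0 : ∀ t ≥ t₀, 0 ≤ φ t)
    (hβ : ∀ t ≥ t₀, HasDerivAt β (β' t) t) (hw : ∀ t ≥ t₀, HasDerivAt w (w' t) t)
    (hx : ∀ t ≥ t₀, HasDerivAt x (v t) t) (hv : ∀ t ≥ t₀, HasDerivAt v (acc t) t)
    (hG : ∀ t ≥ t₀, HasDerivAt G (G' t) t)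
    (hode : ∀ t ≥ t₀, acc t + (α / t) • v t + β t • G' t + (w t + β' t + β t / t) • G t = 0)
    (hgrowth : ∀ t ≥ t₀, ε * (w t + β' t + β t / t) ≤ (α - 3) * w t - t * w' t)
    (hφ : IsSubgradientAlong t₀ φ x G) (hφz : ∀ t ≥ t₀, φ t ≤ inner ℝ (G t) (x t - z)) :
    AntitoneOn (energy (α - 1 - ε) ε w β φ x v G z) (Ici t₀) := by
  have hpos : ∀ t ≥ t₀, 0 < t := fun t ht => ht₀.trans_le ht
  refine hφ.antitoneOn_mul_add (fun t ht => hasDerivAt_potentialWeight (hw t ht) (hβ t ht))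
    (fun t ht => potentialWeight_nonneg (hpos t ht).le hε (hw0 t ht) (hβ0 t ht))
    (fun t ht => hasDerivAt_kineticEnergy (hpos t ht).ne' (hβ t ht) (hx t ht) (hv t ht) (hG t ht)
      (hode t ht)) hx hG fun t ht => ?_
  have ht0 := hpos t ht
  have hwt := hw0 t ht
  have hβt := hβ0 t ht
  have hc : 0 ≤ α - 1 - ε := sub_nonneg.2 hεα
  have hweight := mul_le_mul_of_nonneg_right
    (deriv_potentialWeight_le ht0 (hgrowth t ht)) (hφ0 t ht)
  have hgap : (α - 1 - ε) * t * w t * φ t ≤ (α - 1 - ε) * t * w t * inner ℝ (G t) (x t - z) :=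
    mul_le_mul_of_nonneg_left (hφz t ht) (mul_nonneg (mul_nonneg hc ht0.le) hwt)
  have hv0 : 0 ≤ t * ε * ‖v t‖ ^ 2 := by positivity
  have hG0 : 0 ≤ t ^ 2 * β t * w t * ‖G t‖ ^ 2 := by positivity
  unfold potentialWeight
  linarith

lemma norm_le_of_energy_le {C : ℝ} (hcε : 0 < c * ε) (hweight : 0 ≤ potentialWeight ε w β t)
    (hφ : 0 ≤ φ t) (hC : energy c ε w β φ x v G z t ≤ C) :
    ‖x t‖ ≤ ‖z‖ + √(C / (c * ε / 2)) := by
  have hsq : c * ε / 2 * ‖x t - z‖ ^ 2 ≤ C := by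
    refine le_trans ?_ hC
    have hpotential := mul_nonneg hweight hφ
    have hmomentum : 0 ≤ 1 / 2 * ‖anchoredMomentum c β x v G z t‖ ^ 2 := by positivity
    unfold energy kineticEnergy
    linarith
  have hdist : ‖x t - z‖ ≤ √(C / (c * ε / 2)) := by
    refine Real.le_sqrt_of_sq_le ?_
    rw [le_div_iff₀ (by positivity)]
    linarith
  exact (norm_le_norm_add_norm_sub' (x t) z).trans (by gcongr)

end Energy

section MoreauTrajectory

variable {H : Type*} [NormedAddCommGroup H] [InnerProductSpace ℝ H] {Φ : H → EReal} {t₀ : ℝ}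
  {lam : ℝ → ℝ} {x p : ℝ → H}

lemma isSubgradientAlong_moreau (hbot : ∀ y, Φ y ≠ ⊥) (hproper : ∃ y, Φ y ≠ ⊤)
    (hconv : EConvexOn Φ) (hlam : ∀ t ≥ t₀, 0 < lam t) (hmono : MonotoneOn lam (Ici t₀))
    (hp : ∀ t ≥ t₀, IsProxPt Φ (lam t) (x t) (p t)) (m : ℝ) :
    IsSubgradientAlong t₀ (fun t => moreau Φ (lam t) (x t) - m) x
      (fun t => (lam t)⁻¹ • (x t - p t)) := by
  intro s hs t hst
  obtain ⟨y, hy⟩ := hproper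
  have ht : t ≥ t₀ := hs.trans hst
  have hps : Φ (p s) ≠ ⊤ := (hp s hs).ne_top hy
  have hle := (hp t ht).moreau_le_toReal_add_inner hconv hbot hps (hlam s hs)
    (hmono hs ht hst) (x s)
  rw [← (hp s hs).moreau_eq (hbot _) hps] at hle
  linarith

theorem trajectory_bounded_general (hΦbot : ∀ y, Φ y ≠ ⊥) (hΦproper : ∃ y, Φ y ≠ ⊤)
    (hΦconv : EConvexOn Φ) {α ε : ℝ} (ht₀ : 0 < t₀) {β b β' w' : ℝ → ℝ} {v acc G' : ℝ → H}
    (hβnonneg : ∀ t ≥ t₀, 0 ≤ β t) (hlampos : ∀ t ≥ t₀, 0 < lam t)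
    (hlammono : MonotoneOn lam (Ici t₀))
    (hβ' : ∀ t ≥ t₀, HasDerivAt β (β' t) t)
    (hw' : ∀ t ≥ t₀, HasDerivAt (fun s => b s - β' s - β s / s) (w' t) t)
    (hx : ∀ t ≥ t₀, HasDerivAt x (v t) t) (hv : ∀ t ≥ t₀, HasDerivAt v (acc t) t)
    (hp : ∀ t ≥ t₀, IsProxPt Φ (lam t) (x t) (p t))
    (hG' : ∀ t ≥ t₀, HasDerivAt (fun s => (lam s)⁻¹ • (x s - p s)) (G' t) t)
    (hode : ∀ t ≥ t₀, acc t + (α / t) • v t + β t • G' t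
      + b t • ((lam t)⁻¹ • (x t - p t)) = 0)
    (hw : ∀ t ≥ t₀, β' t + β t / t ≤ b t) (hε : 0 < ε) (hεα : ε < α - 1)
    (hgrowth : ∀ t ≥ t₀, ε * b t ≤ (α - 3) * (b t - β' t - β t / t) - t * w' t)
    (hargmin : ∃ z, ∀ y, Φ z ≤ Φ y) :
    ∃ M : ℝ, ∀ t ≥ t₀, ‖x t‖ ≤ M := by
  obtain ⟨z, hz⟩ := hargmin
  have hztop : Φ z ≠ ⊤ := hΦproper.elim fun y hy => ne_top_of_le_ne_top hy (hz y)
  set w : ℝ → ℝ := fun s => b s - β' s - β s / s with hwdef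
  have hb : ∀ t, w t + β' t + β t / t = b t := fun t => by simp only [hwdef]; ring
  have hw0 : ∀ t ≥ t₀, 0 ≤ w t := fun t ht => by linarith [hb t, hw t ht]
  have hφ0 : ∀ t ≥ t₀, 0 ≤ moreau Φ (lam t) (x t) - (Φ z).toReal := fun t ht =>
    sub_nonneg.2 <| (hp t ht).le_moreau (hΦbot _) ((hp t ht).ne_top hztop) (hlampos t ht).le <|
      (EReal.coe_toReal hztop (hΦbot z)).trans_le (hz _)
  have hφz : ∀ t ≥ t₀, moreau Φ (lam t) (x t) - (Φ z).toReal
      ≤ inner ℝ ((lam t)⁻¹ • (x t - p t)) (x t - z) := fun t ht => by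
    simpa [add_comm] using
      (hp t ht).moreau_le_toReal_add_inner hΦconv hΦbot hztop (hlampos t ht) le_rfl z
  have henergy := antitoneOn_energy ht₀ hε.le hεα.le hβnonneg hw0 hφ0 hβ' hw' hx hv hG'
    (fun t ht => by rw [hb]; exact hode t ht) (fun t ht => by rw [hb]; exact hgrowth t ht)
    (isSubgradientAlong_moreau hΦbot hΦproper hΦconv hlampos hlammono hp _) hφz
  exact ⟨_, fun t ht => norm_le_of_energy_le (mul_pos (sub_pos.2 hεα) hε)
    (potentialWeight_nonneg (ht₀.le.trans ht) hε.le (hw0 t ht) (hβnonneg t ht)) (hφ0 t ht)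
    (henergy self_mem_Ici ht ht)⟩

end MoreauTrajectory

theorem trajectory_bounded
    {H : Type*} [NormedAddCommGroup H] [InnerProductSpace ℝ H] [CompleteSpace H]
    (Φ : H → EReal)
    (hΦbot : ∀ y, Φ y ≠ ⊥) (hΦproper : ∃ y, Φ y ≠ ⊤)
    (hΦconv : EConvexOn Φ) (hΦlsc : LowerSemicontinuous Φ)
    (t₀ α : ℝ) (ht₀ : 0 < t₀)
    (β b lam β' b' lam' w' : ℝ → ℝ)
    (hβnonneg : ∀ t ≥ t₀, 0 ≤ β t)
    (hbpos : ∀ t ≥ t₀, 0 < b t)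
    (hlampos : ∀ t ≥ t₀, 0 < lam t)
    (hβ' : ∀ t ≥ t₀, HasDerivAt β (β' t) t)
    (hb' : ∀ t ≥ t₀, HasDerivAt b (b' t) t)
    (hlam' : ∀ t ≥ t₀, HasDerivAt lam (lam' t) t)
    (hw' : ∀ t ≥ t₀, HasDerivAt (fun s => b s - β' s - β s / s) (w' t) t)
    (x v acc p G' : ℝ → H)
    (hx : ∀ t ≥ t₀, HasDerivAt x (v t) t)
    (hv : ∀ t ≥ t₀, HasDerivAt v (acc t) t)
    (hp : ∀ t ≥ t₀, IsProxPt Φ (lam t) (x t) (p t))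
    (hG' : ∀ t ≥ t₀, HasDerivAt (fun s => (lam s)⁻¹ • (x s - p s)) (G' t) t)
    (hode : ∀ t ≥ t₀, acc t + (α / t) • v t + β t • G' t
        + b t • ((lam t)⁻¹ • (x t - p t)) = 0)
    (hα : 1 < α)
    (hlammono : MonotoneOn lam (Set.Ici t₀))
    (hw : ∀ t ≥ t₀, β' t + β t / t < b t)
    (hAs2 : ∃ ε, 0 < ε ∧ ε < α - 1 ∧
      ∀ t ≥ t₀, ε * b t ≤ (α - 3) * (b t - β' t - β t / t) - t * w' t)
    (hargmin : ∃ z, ∀ y, Φ z ≤ Φ y)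
    :
    ∃ M : ℝ, ∀ t ≥ t₀, ‖x t‖ ≤ M := by
  obtain ⟨ε, hε, hεα, hgrowth⟩ := hAs2
  exact trajectory_bounded_general hΦbot hΦproper hΦconv ht₀ hβnonneg hlampos hlammono hβ' hw' hx hv
    hp hG' hode (fun t ht => (hw t ht).le) hε hεα hgrowth hargmin
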